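/- Suppose Hᵣℓ → Hᵣ in the H₂ norm, where each Hᵣℓ and Hᵣ is a sum of r simple-pole terms, and Hᵣ(z) = Σⱼ ρⱼ/(z − λⱼ) with distinct poles λⱼ (Re λⱼ < 0) and nonzero residues ρⱼ. Assume further that for all sufficiently large ℓ, Hᵣℓ(z) = Σⱼ ρⱼℓ/(z − λⱼℓ) with distinct poles. Then, after suitable reordering to match poles, λⱼℓ → λⱼ and ρⱼℓ → ρⱼ for each j. -/

import Mathlib

open MeasureTheory Complex Filter

/-!
On partial fractions with stable poles the `H₂` inner product is given by the Cauchy matrix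
`-1 / (aᵢ + conj aⱼ)`. Let `b(z) = (z - q) / (z + conj q)` be the Blaschke factor of a stable
point `q`. Multiplying the residue at each pole `aⱼ` by `b(aⱼ)` changes the Gram form by a rank
one positive term, so the operation contracts the `H₂` norm, and the defect is a multiple of
the squared modulus of the function at `-conj q`. Iterating, one may delete any set of poles from
`Hᵣℓ - Hᵣ` at the cost of Blaschke products.

Deleting every pole but `λₖ` shows that the Blaschke product of the poles `λⱼℓ` tends to zero at
`λₖ`, so some `λⱼℓ` approaches `λₖ`. Deleting every pole but `λₖ` and its approximant and
evaluating at `-conj λₖ` then compares the two residues.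
-/

open ComplexConjugate Topology

section Definitions

variable {ι : Type*}

/-- The strictly proper rational function with simple poles `a j` and residues `c j`. -/
noncomputable def poleResidueSum [Fintype ι] (a c : ι → ℂ) (z : ℂ) : ℂ :=
  ∑ j, c j / (z - a j)

/-- The squared `H₂` norm of a function, computed from its values on the imaginary axis.
The integral has the junk value `0` when these values are not square integrable. -/
noncomputable def h2NormSq (F : ℂ → ℂ) : ℝ :=
  (1 / (2 * Real.pi)) * ∫ ω : ℝ, ‖F (I * ω)‖ ^ 2

/-- The Blaschke factor of the left half plane with zero `q`. -/
noncomputable def blaschkeFactor (q z : ℂ) : ℂ :=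
  (z - q) / (z + conj q)

/-- The finite Blaschke product of the left half plane with zeros `w i`, `i ∈ t`. -/
noncomputable def blaschkeProduct (t : Finset ι) (w : ι → ℂ) (z : ℂ) : ℂ :=
  ∏ i ∈ t, blaschkeFactor (w i) z

end Definitions

section Limits

variable {α : Type*} {l : Filter α}

lemma exists_perm_tendsto {ι X : Type*} [Finite ι] [MetricSpace X] {u : ι → X}
    {uSeq : α → ι → X} (hinj : Function.Injective u)
    (h : ∀ k, ∀ δ > 0, ∀ᶠ x in l, ∃ j, dist (uSeq x j) (u k) < δ) :
    ∃ σ : α → Equiv.Perm ι, ∀ k, Tendsto (fun x => uSeq x (σ x k)) l (𝓝 (u k)) := by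
  classical
  have hmin (x : α) (k : ι) : ∃ j, ∀ i, dist (uSeq x j) (u k) ≤ dist (uSeq x i) (u k) :=
    haveI : Nonempty ι := ⟨k⟩
    Finite.exists_min fun j => dist (uSeq x j) (u k)
  choose nearest hnearest using hmin
  have hlim (k : ι) : Tendsto (fun x => uSeq x (nearest x k)) l (𝓝 (u k)) := by
    refine Metric.tendsto_nhds.mpr fun δ hδ => ?_
    filter_upwards [h k δ hδ] with x ⟨j, hj⟩
    exact (hnearest x k j).trans_lt hj
  have hsep : ∀ᶠ x in l, ∀ k i, k ≠ i → uSeq x (nearest x k) ≠ uSeq x (nearest x i) := by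
    simp only [eventually_all]
    exact fun k i hki => (((hlim k).dist (hlim i)).eventually_const_lt
      (dist_pos.mpr (hinj.ne hki))).mono fun _ => dist_pos.mp
  have hbij : ∀ᶠ x in l, Function.Bijective (nearest x) := by
    filter_upwards [hsep] with x hx
    refine Finite.injective_iff_bijective.mp fun k i hki => ?_
    by_contra hne
    exact hx k i hne (by rw [hki])
  refine ⟨fun x => if hx : Function.Bijective (nearest x) then Equiv.ofBijective _ hx else 1,
    fun k => (hlim k).congr' ?_⟩
  filter_upwards [hbij] with x hx
  rw [dif_pos hx, Equiv.ofBijective_apply]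

lemma tendsto_of_tendsto_mul_sub_mul {𝕜 : Type*} [NormedField 𝕜] {u f g : α → 𝕜} {v L : 𝕜}
    (hL : L ≠ 0) (hf : Tendsto f l (𝓝 L)) (hg : Tendsto g l (𝓝 L))
    (h : Tendsto (fun x => u x * f x - v * g x) l (𝓝 0)) : Tendsto u l (𝓝 v) := by
  have hprod : Tendsto (fun x => u x * f x) l (𝓝 (v * L)) := by
    simpa using h.add (hg.const_mul v)
  have hquot := hprod.div hf hL
  rw [mul_div_cancel_right₀ _ hL] at hquot
  refine hquot.congr' ?_
  filter_upwards [hf.eventually_ne hL] with x hx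
  exact mul_div_cancel_right₀ _ hx

end Limits

section HalfPlane

variable {p q : ℂ}

lemma I_mul_ofReal_sub_ne_zero (hp : p.re ≠ 0) (ω : ℝ) : I * ω - p ≠ 0 :=
  fun h => hp (by simpa using congrArg re h)

lemma add_conj_ne_zero (hp : p.re < 0) (hq : q.re < 0) : p + conj q ≠ 0 := by
  intro h
  have hre : p.re + q.re = 0 := by simpa using congrArg re h
  linarith

lemma sumElim_re_neg {ι κ : Type*} {a : ι → ℂ} {b : κ → ℂ} (ha : ∀ j, (a j).re < 0)
    (hb : ∀ j, (b j).re < 0) (i : ι ⊕ κ) : (Sum.elim a b i).re < 0 :=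
  i.rec ha hb

end HalfPlane

section GramFormula

variable {p q : ℂ}

lemma memLp_two_inv_I_mul_sub (hp : p.re ≠ 0) :
    MemLp (fun ω : ℝ => (I * ω - p)⁻¹) 2 := by
  have hcont : Continuous fun ω : ℝ => (I * ω - p)⁻¹ :=
    Continuous.inv₀ (by fun_prop) (I_mul_ofReal_sub_ne_zero hp)
  rw [memLp_two_iff_integrable_sq_norm hcont.aestronglyMeasurable]
  have hcauchy :=
    ((integrable_inv_one_add_sq.comp_div hp).comp_sub_right p.im).const_mul (p.re ^ 2)⁻¹
  refine hcauchy.congr (Eventually.of_forall fun ω => ?_)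
  simp only [norm_inv, inv_pow, Complex.sq_norm, normSq_apply]
  rw [← mul_inv]
  congr 1
  simp only [sub_re, mul_re, I_re, ofReal_re, zero_mul, I_im, ofReal_im, mul_zero, sub_self,
    zero_sub, mul_neg, neg_mul, neg_neg, sub_im, mul_im, one_mul, zero_add]
  field_simp

lemma integrable_inv_mul_conj_inv (hp : p.re ≠ 0) (hq : q.re ≠ 0) :
    Integrable fun ω : ℝ => (I * ω - p)⁻¹ * conj (I * ω - q)⁻¹ :=
  (memLp_two_inv_I_mul_sub hp).integrable_mul (memLp_two_inv_I_mul_sub hq).star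

lemma intervalIntegral_inv_I_mul_sub (hp : p.re < 0) (T : ℝ) :
    ∫ ω in -T..T, (I * ω - p)⁻¹ = -I * (log (I * T - p) - log (-(I * T) - p)) := by
  have hderiv (ω : ℝ) : HasDerivAt (fun ω : ℝ => -I * log (I * ω - p)) (I * ω - p)⁻¹ ω := by
    have hlin : HasDerivAt (fun ω : ℝ => I * (ω : ℂ) - p) I ω := by
      simpa using ((hasDerivAt_id ω).ofReal_comp.const_mul I).sub_const p
    have hslit : I * ω - p ∈ slitPlane := by
      rw [mem_slitPlane_iff]; left; simpa using hp
    refine ((hlin.clog_real hslit).const_mul (-I)).congr_deriv ?_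
    rw [div_eq_mul_inv, ← mul_assoc, neg_mul, I_mul_I, neg_neg, one_mul]
  have hcont : Continuous fun ω : ℝ => (I * ω - p)⁻¹ :=
    Continuous.inv₀ (by fun_prop) (I_mul_ofReal_sub_ne_zero hp.ne)
  rw [intervalIntegral.integral_eq_sub_of_hasDerivAt (fun ω _ => hderiv ω)
    (hcont.intervalIntegrable _ _)]
  push_cast
  rw [mul_neg]
  ring

lemma tendsto_intervalIntegral_inv_I_mul_sub (hp : p.re < 0) :
    Tendsto (fun T : ℝ => ∫ ω in -T..T, (I * ω - p)⁻¹) atTop (𝓝 (Real.pi : ℂ)) := by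
  have hsmall : Tendsto (fun T : ℝ => p / T) atTop (𝓝 0) := by
    simpa [div_eq_mul_inv] using
      (((continuous_ofReal.tendsto 0).comp tendsto_inv_atTop_zero).const_mul p)
  have hlim (u : ℂ) (hu : u ∈ slitPlane) :
      Tendsto (fun T : ℝ => log (u - p / T)) atTop (𝓝 (log u)) := by
    have := hsmall.const_sub u
    rw [sub_zero] at this
    exact this.clog hu
  have hval : (Real.pi : ℂ) = -I * (log I - log (-I)) := by
    rw [log_I, log_neg_I]
    linear_combination (Real.pi : ℂ) * I_sq
  rw [hval]
  refine (((hlim I (by simp [mem_slitPlane_iff])).sub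
    (hlim (-I) (by simp [mem_slitPlane_iff]))).const_mul (-I)).congr' ?_
  filter_upwards [eventually_gt_atTop 0] with T hT
  have hT' : (T : ℂ) ≠ 0 := ofReal_ne_zero.mpr hT.ne'
  have hscale (u : ℝ) : log (u * I * T - p) = Real.log T + log (u * I - p / T) := by
    have hfactor : u * I * T - p = T * (u * I - p / T) := by field_simp
    have hne : u * I * T - p ≠ 0 := by
      rw [mul_comm (u : ℂ) I, mul_assoc, ← ofReal_mul]
      exact I_mul_ofReal_sub_ne_zero hp.ne (u * T)
    rw [hfactor] at hne ⊢
    exact log_ofReal_mul hT (right_ne_zero_of_mul hne)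
  have hpos := hscale 1
  have hneg := hscale (-1)
  push_cast at hpos hneg
  simp only [one_mul, neg_mul] at hpos hneg
  rw [intervalIntegral_inv_I_mul_sub hp, hpos, hneg]
  ring

lemma integral_inv_mul_conj_inv (hp : p.re < 0) (hq : q.re < 0) :
    ∫ ω : ℝ, (I * ω - p)⁻¹ * conj (I * ω - q)⁻¹ = 2 * Real.pi * (-1 / (p + conj q)) := by
  have hpq := add_conj_ne_zero hp hq
  have hpartial (ω : ℝ) : (I * ω - p)⁻¹ * conj (I * ω - q)⁻¹
      = -1 / (p + conj q) * ((I * ω - p)⁻¹ + conj (I * ω - q)⁻¹) := by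
    have hp' := I_mul_ofReal_sub_ne_zero hp.ne ω
    have hq' := (map_ne_zero conj).mpr (I_mul_ofReal_sub_ne_zero hq.ne ω)
    rw [map_inv₀]
    field_simp
    simp only [map_sub, map_mul, conj_I, conj_ofReal]
    ring
  have hcont {s : ℂ} (hs : s.re < 0) : Continuous fun ω : ℝ => (I * ω - s)⁻¹ :=
    Continuous.inv₀ (by fun_prop) (I_mul_ofReal_sub_ne_zero hs.ne)
  have hlim := ((tendsto_intervalIntegral_inv_I_mul_sub hp).add
    ((continuous_conj.tendsto _).comp
      (tendsto_intervalIntegral_inv_I_mul_sub hq))).const_mul (-1 / (p + conj q))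
  refine tendsto_nhds_unique (intervalIntegral_tendsto_integral
    (integrable_inv_mul_conj_inv hp.ne hq.ne) tendsto_neg_atTop_atBot tendsto_id) ?_
  convert hlim using 2 with T
  · have hconj : Continuous fun ω : ℝ => conj (I * ω - q)⁻¹ := continuous_conj.comp (hcont hq)
    simp only [hpartial, id_eq, Function.comp_apply]
    rw [intervalIntegral.integral_const_mul, intervalIntegral.integral_add
      ((hcont hp).intervalIntegrable _ _) (hconj.intervalIntegrable _ _),
      intervalIntegral.intervalIntegral_conj]
  · rw [conj_ofReal]
    ring

lemma h2NormSq_poleResidueSum {ι : Type*} [Fintype ι] {a : ι → ℂ} (ha : ∀ j, (a j).re < 0)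
    (c : ι → ℂ) :
    (h2NormSq (poleResidueSum a c) : ℂ)
      = ∑ i, ∑ j, c i * conj (c j) * (-1 / (a i + conj (a j))) := by
  have hexpand (ω : ℝ) : ((‖poleResidueSum a c (I * ω)‖ ^ 2 : ℝ) : ℂ)
      = ∑ i, ∑ j, c i * conj (c j) * ((I * ω - a i)⁻¹ * conj (I * ω - a j)⁻¹) := by
    rw [ofReal_pow, ← mul_conj', poleResidueSum, map_sum, Finset.sum_mul_sum]
    refine Finset.sum_congr rfl fun i _ => Finset.sum_congr rfl fun j _ => ?_
    rw [div_eq_mul_inv, div_eq_mul_inv, map_mul]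
    ring
  have hint (i j : ι) : Integrable fun ω : ℝ =>
      c i * conj (c j) * ((I * ω - a i)⁻¹ * conj (I * ω - a j)⁻¹) :=
    (integrable_inv_mul_conj_inv (ha i).ne (ha j).ne).const_mul _
  rw [h2NormSq, ofReal_mul, ← integral_complex_ofReal]
  simp only [hexpand]
  rw [integral_finsetSum _ fun i _ => integrable_finsetSum _ fun j _ => hint i j, Finset.mul_sum]
  refine Finset.sum_congr rfl fun i _ => ?_
  rw [integral_finsetSum _ fun j _ => hint i j, Finset.mul_sum]
  refine Finset.sum_congr rfl fun j _ => ?_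
  rw [integral_const_mul, integral_inv_mul_conj_inv (ha i) (ha j)]
  have hpi : (Real.pi : ℂ) ≠ 0 := ofReal_ne_zero.mpr Real.pi_ne_zero
  push_cast
  field_simp

end GramFormula

lemma h2NormSq_nonneg (F : ℂ → ℂ) : 0 ≤ h2NormSq F := by
  unfold h2NormSq
  positivity

section Blaschke

variable {ι τ : Type*} {p q : ℂ}

lemma cauchyKernel_mul_one_sub_blaschkeFactor {p' : ℂ} (hq : q.re < 0) (hp : p.re < 0)
    (hp' : p'.re < 0) :
    -1 / (p + conj p') * (1 - blaschkeFactor q p * conj (blaschkeFactor q p'))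
      = -2 * q.re * ((p + conj q)⁻¹ * conj (p' + conj q)⁻¹) := by
  have hpp' := add_conj_ne_zero hp hp'
  have hpq := add_conj_ne_zero hp hq
  have hp'q := (map_ne_zero conj).mpr (add_conj_ne_zero hp' hq)
  have hre : (2 * q.re : ℂ) = q + conj q := by rw [add_conj]; push_cast; ring
  rw [neg_mul, hre, blaschkeFactor, blaschkeFactor, map_div₀, map_inv₀]
  simp only [map_add, map_sub, conj_conj] at hp'q ⊢
  field_simp
  ring

lemma continuousAt_blaschkeFactor {z : ℂ} (hq : q.re < 0) (hz : z.re < 0) :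
    ContinuousAt (fun y : ℂ × ℂ => blaschkeFactor y.1 y.2) (q, z) := by
  unfold blaschkeFactor
  exact ContinuousAt.div (by fun_prop) (by fun_prop) (add_conj_ne_zero hz hq)

lemma blaschkeFactor_ne_zero {z : ℂ} (hq : q.re < 0) (hz : z.re < 0) (hzq : z ≠ q) :
    blaschkeFactor q z ≠ 0 :=
  div_ne_zero (sub_ne_zero.mpr hzq) (add_conj_ne_zero hz hq)

lemma le_norm_blaschkeFactor {z : ℂ} {δ : ℝ} (hq : q.re < 0) (hz : z.re < 0) (hδ : 0 < δ)
    (hfar : δ ≤ dist q z) : δ / (δ + -2 * z.re) ≤ ‖blaschkeFactor q z‖ := by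
  have hden : ‖z + conj q‖ ≤ dist q z + -2 * z.re := by
    calc ‖z + conj q‖ = ‖conj (q - z) + (z + conj z)‖ := by rw [map_sub]; ring_nf
      _ ≤ ‖conj (q - z)‖ + ‖z + conj z‖ := norm_add_le _ _
      _ = dist q z + -2 * z.re := by
        rw [norm_conj, add_conj, norm_real, Real.norm_eq_abs, abs_of_neg (by linarith),
          dist_eq_norm, neg_mul]
  have hpos : 0 < ‖z + conj q‖ := norm_pos_iff.mpr (add_conj_ne_zero hz hq)
  rw [blaschkeFactor, norm_div, ← dist_eq_norm, dist_comm z q,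
    div_le_div_iff₀ (by linarith) hpos]
  nlinarith

lemma blaschkeProduct_eq_zero {t : Finset τ} {w : τ → ℂ} {i : τ} (hi : i ∈ t) :
    blaschkeProduct t w (w i) = 0 :=
  Finset.prod_eq_zero hi (by simp [blaschkeFactor])

lemma blaschkeProduct_ne_zero {t : Finset τ} {w : τ → ℂ} {z : ℂ} (hw : ∀ i ∈ t, (w i).re < 0)
    (hz : z.re < 0) (hzw : ∀ i ∈ t, z ≠ w i) : blaschkeProduct t w z ≠ 0 :=
  Finset.prod_ne_zero_iff.mpr fun i hi => blaschkeFactor_ne_zero (hw i hi) hz (hzw i hi)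

variable [Fintype ι] {a : ι → ℂ}

lemma h2NormSq_eq_add_blaschkeFactor (ha : ∀ j, (a j).re < 0) (hq : q.re < 0) (c : ι → ℂ) :
    h2NormSq (poleResidueSum a c)
      = h2NormSq (poleResidueSum a fun j => c j * blaschkeFactor q (a j))
        + -2 * q.re * ‖∑ j, c j / (a j + conj q)‖ ^ 2 := by
  have hsq : ((‖∑ j, c j / (a j + conj q)‖ ^ 2 : ℝ) : ℂ)
      = ∑ i, ∑ j, c i * conj (c j) * ((a i + conj q)⁻¹ * conj (a j + conj q)⁻¹) := by
    rw [ofReal_pow, ← mul_conj', map_sum, Finset.sum_mul_sum]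
    refine Finset.sum_congr rfl fun i _ => Finset.sum_congr rfl fun j _ => ?_
    rw [div_eq_mul_inv, div_eq_mul_inv, map_mul]
    ring
  apply ofReal_injective
  rw [ofReal_add, ofReal_mul, hsq, h2NormSq_poleResidueSum ha, h2NormSq_poleResidueSum ha,
    Finset.mul_sum, ← Finset.sum_add_distrib]
  refine Finset.sum_congr rfl fun i _ => ?_
  rw [Finset.mul_sum, ← Finset.sum_add_distrib]
  refine Finset.sum_congr rfl fun j _ => ?_
  have hrank := cauchyKernel_mul_one_sub_blaschkeFactor hq (ha i) (ha j)
  rw [map_mul]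
  push_cast
  linear_combination c i * conj (c j) * hrank

lemma h2NormSq_mul_blaschkeProduct_le (ha : ∀ j, (a j).re < 0) {t : Finset τ} {w : τ → ℂ}
    (hw : ∀ i ∈ t, (w i).re < 0) (c : ι → ℂ) :
    h2NormSq (poleResidueSum a fun j => c j * blaschkeProduct t w (a j))
      ≤ h2NormSq (poleResidueSum a c) := by
  induction t using Finset.cons_induction with
  | empty => simp [blaschkeProduct]
  | cons i t hi ih =>
    have hwi : (w i).re < 0 := hw i (Finset.mem_cons_self i t)
    refine le_trans ?_ (ih fun m hm => hw m (Finset.mem_cons_of_mem hm))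
    have hcons (j : ι) : c j * blaschkeProduct (t.cons i hi) w (a j)
        = c j * blaschkeProduct t w (a j) * blaschkeFactor (w i) (a j) := by
      rw [blaschkeProduct, Finset.prod_cons, mul_comm (blaschkeFactor _ _), ← mul_assoc,
        blaschkeProduct]
    rw [h2NormSq_eq_add_blaschkeFactor ha hwi fun j => c j * blaschkeProduct t w (a j)]
    simp only [hcons]
    exact le_add_of_nonneg_right (mul_nonneg (by linarith) (sq_nonneg _))

lemma sum_blaschkeProduct_eq_single {t : Finset τ} {w : τ → ℂ} {k : ι}
    (h : ∀ j ≠ k, ∃ i ∈ t, w i = a j) (c : ι → ℂ) (q : ℂ) :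
    ∑ j, c j * blaschkeProduct t w (a j) / (a j + conj q)
      = c k * (blaschkeProduct t w (a k) / (a k + conj q)) := by
  rw [Fintype.sum_eq_single k, mul_div_assoc]
  intro j hj
  obtain ⟨i, hi, hij⟩ := h j hj
  rw [← hij, blaschkeProduct_eq_zero hi, mul_zero, zero_div]

lemma norm_sum_blaschkeProduct_sq_le (ha : ∀ j, (a j).re < 0) {t : Finset τ} {w : τ → ℂ}
    (hw : ∀ i ∈ t, (w i).re < 0) (hq : q.re < 0) (c : ι → ℂ) :
    -2 * q.re * ‖∑ j, c j * blaschkeProduct t w (a j) / (a j + conj q)‖ ^ 2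
      ≤ h2NormSq (poleResidueSum a c) := by
  refine le_trans ?_ (h2NormSq_mul_blaschkeProduct_le ha hw c)
  rw [h2NormSq_eq_add_blaschkeFactor ha hq]
  exact le_add_of_nonneg_left (h2NormSq_nonneg _)

end Blaschke

section Convergence

variable {ι κ τ α : Type*} [Fintype ι] [Fintype κ] {l : Filter α}
  {a c : ι → ℂ} {aSeq cSeq : α → κ → ℂ}

lemma poleResidueSum_sub (b d : κ → ℂ) (a c : ι → ℂ) (z : ℂ) :
    poleResidueSum b d z - poleResidueSum a c z
      = poleResidueSum (Sum.elim b a) (Sum.elim d (-c)) z := by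
  simp [poleResidueSum, Fintype.sum_sum_type, neg_div, sub_eq_add_neg]

lemma poleResidueSum_comp_equiv (σ : κ ≃ ι) (a c : ι → ℂ) :
    poleResidueSum (a ∘ σ) (c ∘ σ) = poleResidueSum a c :=
  funext fun z => σ.sum_comp fun j => c j / (z - a j)

/-- By the residue theorem the expression is, up to a constant factor, the integral over the
imaginary axis of the difference times `z ↦ blaschkeProduct t (w x) z / (z + conj q)`. -/
lemma tendsto_sum_blaschkeProduct_sub (ha : ∀ j, (a j).re < 0)
    (haSeq : ∀ᶠ x in l, ∀ j, (aSeq x j).re < 0)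
    (h : Tendsto (fun x => h2NormSq fun z =>
      poleResidueSum (aSeq x) (cSeq x) z - poleResidueSum a c z) l (𝓝 0))
    {t : Finset τ} {w : α → τ → ℂ} (hw : ∀ᶠ x in l, ∀ i ∈ t, (w x i).re < 0)
    {q : ℂ} (hq : q.re < 0) :
    Tendsto (fun x => ∑ j, cSeq x j * blaschkeProduct t (w x) (aSeq x j) / (aSeq x j + conj q)
      - ∑ j, c j * blaschkeProduct t (w x) (a j) / (a j + conj q)) l (𝓝 0) := by
  have hq' : 0 < -2 * q.re := by linarith
  have hlim : Tendsto (fun x => √((h2NormSq fun z =>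
      poleResidueSum (aSeq x) (cSeq x) z - poleResidueSum a c z) / (-2 * q.re))) l (𝓝 0) := by
    simpa using (h.div_const (-2 * q.re)).sqrt
  refine squeeze_zero_norm' ?_ hlim
  filter_upwards [haSeq, hw] with x hax hwx
  have hbound := norm_sum_blaschkeProduct_sq_le (a := Sum.elim (aSeq x) a)
    (sumElim_re_neg hax ha) hwx hq (Sum.elim (cSeq x) (-c))
  simp only [Fintype.sum_sum_type, Sum.elim_inl, Sum.elim_inr, Pi.neg_apply, neg_mul, neg_div,
    Finset.sum_neg_distrib, ← sub_eq_add_neg, ← funext (poleResidueSum_sub _ _ _ _)] at hbound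
  refine Real.le_sqrt_of_sq_le ((le_div_iff₀' hq').mpr ?_)
  simpa only [neg_mul] using hbound

lemma tendsto_blaschkeProduct_pole (ha : ∀ j, (a j).re < 0) (hinj : Function.Injective a)
    (haSeq : ∀ᶠ x in l, ∀ j, (aSeq x j).re < 0)
    (h : Tendsto (fun x => h2NormSq fun z =>
      poleResidueSum (aSeq x) (cSeq x) z - poleResidueSum a c z) l (𝓝 0))
    {k : ι} (hc : c k ≠ 0) :
    Tendsto (fun x => blaschkeProduct Finset.univ (aSeq x) (a k)) l (𝓝 0) := by
  classical
  let t : Finset (κ ⊕ ι) := Finset.univ.disjSum (Finset.univ.erase k)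
  let others : ℂ := blaschkeProduct (Finset.univ.erase k) a (a k)
  have hothers : others ≠ 0 := blaschkeProduct_ne_zero (fun i _ => ha i) (ha k)
    fun i hi => hinj.ne (Finset.ne_of_mem_erase hi).symm
  have hpair := tendsto_sum_blaschkeProduct_sub ha haSeq h (t := t)
    (w := fun x => Sum.elim (aSeq x) a)
    (haSeq.mono fun _ hx i _ => sumElim_re_neg hx ha i) (ha k)
  have hne : -(c k * (others / (a k + conj (a k)))) ≠ 0 :=
    neg_ne_zero.mpr (mul_ne_zero hc (div_ne_zero hothers (add_conj_ne_zero (ha k) (ha k))))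
  have hquot := hpair.div_const (-(c k * (others / (a k + conj (a k)))))
  rw [zero_div] at hquot
  refine hquot.congr fun x => ?_
  have hseq (j : κ) : blaschkeProduct t (Sum.elim (aSeq x) a) (aSeq x j) = 0 :=
    blaschkeProduct_eq_zero (i := Sum.inl j) (by simp [t])
  have hkill (j : ι) (hj : j ≠ k) : ∃ i ∈ t, Sum.elim (aSeq x) a i = a j :=
    ⟨Sum.inr j, by simpa [t] using hj, rfl⟩
  have hsplit : blaschkeProduct t (Sum.elim (aSeq x) a) (a k)
      = blaschkeProduct Finset.univ (aSeq x) (a k) * others :=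
    Finset.prod_disjSum _ _ _
  rw [div_eq_iff hne, Finset.sum_eq_zero fun j _ => by rw [hseq, mul_zero, zero_div],
    sum_blaschkeProduct_eq_single hkill, hsplit]
  ring

lemma eventually_exists_dist_lt_of_tendsto_blaschkeProduct {z : ℂ} (hz : z.re < 0)
    (haSeq : ∀ᶠ x in l, ∀ j, (aSeq x j).re < 0)
    (h : Tendsto (fun x => blaschkeProduct Finset.univ (aSeq x) z) l (𝓝 0))
    {δ : ℝ} (hδ : 0 < δ) : ∀ᶠ x in l, ∃ j, dist (aSeq x j) z < δ := by
  have hm : 0 < δ / (δ + -2 * z.re) := div_pos hδ (by linarith)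
  have hsmall : ∀ᶠ x in l, ‖blaschkeProduct Finset.univ (aSeq x) z‖
      < (δ / (δ + -2 * z.re)) ^ Fintype.card κ :=
    (tendsto_zero_iff_norm_tendsto_zero.mp h).eventually_lt_const (pow_pos hm _)
  filter_upwards [haSeq, hsmall] with x hax hx
  by_contra! hfar
  refine hx.not_ge ?_
  calc (δ / (δ + -2 * z.re)) ^ Fintype.card κ = ∏ _j : κ, δ / (δ + -2 * z.re) := by
        rw [Finset.prod_const, Finset.card_univ]
    _ ≤ ∏ j, ‖blaschkeFactor (aSeq x j) z‖ := Finset.prod_le_prod (fun _ _ => hm.le)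
        fun j _ => le_norm_blaschkeFactor (hax j) hz hδ (hfar j)
    _ = ‖blaschkeProduct Finset.univ (aSeq x) z‖ := (norm_prod _ _).symm

lemma tendsto_blaschkeProduct {t : Finset τ} {w : α → τ → ℂ} {w₀ : τ → ℂ} {z : α → ℂ} {z₀ : ℂ}
    (hw₀ : ∀ i ∈ t, (w₀ i).re < 0) (hz₀ : z₀.re < 0)
    (hw : ∀ i ∈ t, Tendsto (fun x => w x i) l (𝓝 (w₀ i))) (hz : Tendsto z l (𝓝 z₀)) :
    Tendsto (fun x => blaschkeProduct t (w x) (z x)) l (𝓝 (blaschkeProduct t w₀ z₀)) :=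
  tendsto_finsetProd _ fun i hi =>
    (continuousAt_blaschkeFactor (hw₀ i hi) hz₀).tendsto.comp ((hw i hi).prodMk_nhds hz)

lemma tendsto_residue {aSeq cSeq : α → ι → ℂ} (ha : ∀ j, (a j).re < 0)
    (hinj : Function.Injective a) (hpole : ∀ j, Tendsto (fun x => aSeq x j) l (𝓝 (a j)))
    (h : Tendsto (fun x => h2NormSq fun z =>
      poleResidueSum (aSeq x) (cSeq x) z - poleResidueSum a c z) l (𝓝 0)) (k : ι) :
    Tendsto (fun x => cSeq x k) l (𝓝 (c k)) := by
  classical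
  let t : Finset (ι ⊕ ι) := (Finset.univ.erase k).disjSum (Finset.univ.erase k)
  have haSeq : ∀ᶠ x in l, ∀ j, (aSeq x j).re < 0 := eventually_all.mpr fun j =>
    ((continuous_re.tendsto _).comp (hpole j)).eventually_lt_const (ha j)
  have hden := add_conj_ne_zero (ha k) (ha k)
  have hne : blaschkeProduct t (Sum.elim a a) (a k) / (a k + conj (a k)) ≠ 0 := by
    refine div_ne_zero (blaschkeProduct_ne_zero (fun i _ => sumElim_re_neg ha ha i) (ha k) ?_) hden
    rintro (i | i) hi <;> exact hinj.ne (by simpa [t, eq_comm] using hi)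
  have htest {z : α → ℂ} (hz : Tendsto z l (𝓝 (a k))) :
      Tendsto (fun x => blaschkeProduct t (Sum.elim (aSeq x) a) (z x) / (z x + conj (a k))) l
        (𝓝 (blaschkeProduct t (Sum.elim a a) (a k) / (a k + conj (a k)))) := by
    refine (tendsto_blaschkeProduct (fun i _ => sumElim_re_neg ha ha i) (ha k) ?_ hz).div
      (hz.add_const _) hden
    rintro (i | i) -
    exacts [hpole i, tendsto_const_nhds]
  refine tendsto_of_tendsto_mul_sub_mul hne (htest (hpole k)) (htest tendsto_const_nhds) ?_
  refine (tendsto_sum_blaschkeProduct_sub ha haSeq h (t := t) (w := fun x => Sum.elim (aSeq x) a)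
    (haSeq.mono fun _ hx i _ => sumElim_re_neg hx ha i) (ha k)).congr fun x => ?_
  have hkillSeq (j : ι) (hj : j ≠ k) : ∃ i ∈ t, Sum.elim (aSeq x) a i = aSeq x j :=
    ⟨Sum.inl j, by simpa [t] using hj, rfl⟩
  have hkill (j : ι) (hj : j ≠ k) : ∃ i ∈ t, Sum.elim (aSeq x) a i = a j :=
    ⟨Sum.inr j, by simpa [t] using hj, rfl⟩
  rw [sum_blaschkeProduct_eq_single hkillSeq, sum_blaschkeProduct_eq_single hkill]

theorem stmt_18_general {aSeq cSeq : α → ι → ℂ} (ha : ∀ j, (a j).re < 0)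
    (hinj : Function.Injective a) (hc : ∀ j, c j ≠ 0)
    (haSeq : ∀ᶠ x in l, ∀ j, (aSeq x j).re < 0)
    (h : Tendsto (fun x => h2NormSq fun z =>
      poleResidueSum (aSeq x) (cSeq x) z - poleResidueSum a c z) l (𝓝 0)) :
    ∃ σ : α → Equiv.Perm ι, ∀ j,
      Tendsto (fun x => aSeq x (σ x j)) l (𝓝 (a j)) ∧
      Tendsto (fun x => cSeq x (σ x j)) l (𝓝 (c j)) := by
  obtain ⟨σ, hpole⟩ := exists_perm_tendsto hinj fun k _ hδ =>
    eventually_exists_dist_lt_of_tendsto_blaschkeProduct (ha k) haSeq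
      (tendsto_blaschkeProduct_pole ha hinj haSeq h (hc k)) hδ
  have hmatched : Tendsto (fun x => h2NormSq fun z =>
      poleResidueSum (aSeq x ∘ σ x) (cSeq x ∘ σ x) z - poleResidueSum a c z) l (𝓝 0) := by
    simpa only [poleResidueSum_comp_equiv] using h
  exact ⟨σ, fun j => ⟨hpole j, tendsto_residue ha hinj hpole hmatched j⟩⟩

end Convergence

/-- If `Hᵣℓ(z) = Σⱼ ρⱼℓ/(z − λⱼℓ)` converges in the H₂ norm to
`Hᵣ(z) = Σⱼ ρⱼ/(z − λⱼ)` with distinct stable poles `λⱼ` and nonzero residues `ρⱼ`,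
and for all sufficiently large `ℓ` the poles `λⱼℓ` are distinct (and stable), then after a
suitable reordering (a permutation for each `ℓ`) the poles and residues converge:
`λⱼℓ → λⱼ` and `ρⱼℓ → ρⱼ`. -/
theorem stmt_18 (r : ℕ) (lam ρ : Fin r → ℂ)
    (hstab : ∀ j, (lam j).re < 0) (hdist : Function.Injective lam)
    (hρ : ∀ j, ρ j ≠ 0)
    (lamSeq ρSeq : ℕ → Fin r → ℂ)
    (hstabSeq : ∀ ℓ j, (lamSeq ℓ j).re < 0)
    (hdistSeq : ∀ᶠ ℓ in atTop, Function.Injective (lamSeq ℓ))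
    (hconv : Tendsto (fun ℓ : ℕ => (1 / (2 * Real.pi)) *
        ∫ ω : ℝ, ‖(∑ j, ρSeq ℓ j / (I * ω - lamSeq ℓ j))
          - ∑ j, ρ j / (I * ω - lam j)‖ ^ 2) atTop (nhds 0)) :
    ∃ σ : ℕ → Equiv.Perm (Fin r), ∀ j,
      Tendsto (fun ℓ => lamSeq ℓ (σ ℓ j)) atTop (nhds (lam j)) ∧
      Tendsto (fun ℓ => ρSeq ℓ (σ ℓ j)) atTop (nhds (ρ j)) := by
  exact stmt_18_general hstab hdist hρ (Eventually.of_forall hstabSeq) hconv
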